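/- arXiv:1603.07628 — 2 statements merged into one kernel-verified Lean document; each statement's English description precedes it below -/
import Mathlib

section
/- (Proposition 13, mean-value representation of the MMSE drop.) Let X be a real random variable with E[X²] < ∞ and let 0 < snr < snr0. Then there exists snr_c ∈ (snr, snr0) such that mmse(X, snr) − mmse(X, snr0) = E[(Var(X|Y_{snr_c}))²]·(snr0 − snr). Moreover, the constant satisfies E[(Var(X|Y_{snr_c}))²] ≤ sup_{γ ∈ (snr, snr0)} E[(Var(X|Y_γ))²] ≤ E[X⁴]. -/
open MeasureTheory ProbabilityTheory Real
open scoped ENNReal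

noncomputable section

/-- The scalar observation `Y_snr = √snr · X + Z`. -/
def obsS {Ω : Type*} (X Z : Ω → ℝ) (snr : ℝ) : Ω → ℝ :=
  fun ω => Real.sqrt snr * X ω + Z ω

/-- The σ-algebra generated by the observation `Y_snr`. -/
def obsSigmaS {Ω : Type*} [MeasurableSpace Ω] (X Z : Ω → ℝ) (snr : ℝ) : MeasurableSpace Ω :=
  MeasurableSpace.comap (obsS X Z snr) inferInstance

/-- `mmse(X, snr) = E[(X − E[X | Y_snr])²]`. -/
def mmseS {Ω : Type*} [MeasurableSpace Ω] (μ : Measure Ω) (X Z : Ω → ℝ) (snr : ℝ) : ℝ :=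
  ∫ ω, (X ω - (μ[X | obsSigmaS X Z snr]) ω) ^ 2 ∂μ

/-- Conditional variance `Var(X|m) = E[X²|m] − (E[X|m])²`. -/
def condVarS {Ω : Type*} (m : MeasurableSpace Ω) [MeasurableSpace Ω] (μ : Measure Ω)
    (X : Ω → ℝ) : Ω → ℝ :=
  fun ω => (μ[fun ω' => (X ω') ^ 2 | m]) ω - ((μ[X | m]) ω) ^ 2

/-- `E[(Var(X|Y_γ))²]`, the negative of the derivative of the MMSE at `γ`. -/
def varSq {Ω : Type*} [MeasurableSpace Ω] (μ : Measure Ω) (X Z : Ω → ℝ) (γ : ℝ) : ℝ :=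
  ∫ ω, (condVarS (obsSigmaS X Z γ) μ X ω) ^ 2 ∂μ

/-- The function `u ↦ u ^ k * exp (-u² / (2t))`, an unnormalised moment weight of `N(0, t)`. -/
def gaussWeight (k : ℕ) (t u : ℝ) : ℝ := u ^ k * exp (-u ^ 2 / (2 * t))

/-- The smoothed moment `w ↦ ∫ (w - x) ^ k * exp (-(w - x)² / (2t)) dν(x)`. -/
def gaussMoment (ν : Measure ℝ) (k : ℕ) (t w : ℝ) : ℝ := ∫ x, gaussWeight k t (w - x) ∂ν

lemma continuous_gaussWeight (k : ℕ) (t : ℝ) : Continuous (gaussWeight k t) := by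
  unfold gaussWeight
  fun_prop

lemma abs_gaussWeight_le {T : ℝ} (k : ℕ) {t : ℝ} (ht : 0 < t) (htT : t ≤ T) (u : ℝ) :
    |gaussWeight k t u| ≤ |gaussWeight k T u| := by
  simp only [gaussWeight, abs_mul, abs_exp]
  have : -u ^ 2 / (2 * t) ≤ -u ^ 2 / (2 * T) := by
    rw [neg_div, neg_div, neg_le_neg_iff]
    gcongr
  gcongr

lemma gaussWeight_mono {T : ℝ} {k : ℕ} (hk : Even k) {t : ℝ} (ht : 0 < t) (htT : t ≤ T) (u : ℝ) :
    gaussWeight k t u ≤ gaussWeight k T u := by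
  have h := abs_gaussWeight_le k ht htT u
  have h0 : ∀ s, 0 ≤ gaussWeight k s u := fun s => mul_nonneg (hk.pow_nonneg u) (exp_pos _).le
  rwa [abs_of_nonneg (h0 t), abs_of_nonneg (h0 T)] at h

lemma exists_abs_gaussWeight_le (k : ℕ) {T : ℝ} (hT : 0 < T) :
    ∃ C, ∀ t u, 0 < t → t ≤ T → |gaussWeight k t u| ≤ C := by
  refine ⟨1 + (2 * T) ^ k * k.factorial, fun t u ht htT => (abs_gaussWeight_le k ht htT u).trans ?_⟩
  have h1 : |u| ^ k ≤ 1 + (u ^ 2) ^ k := by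
    have h2 : (u ^ 2) ^ k = (|u| ^ k) ^ 2 := by rw [← sq_abs]; ring
    rw [h2]
    nlinarith [sq_nonneg (|u| ^ k - 1)]
  have h3 : (u ^ 2) ^ k ≤ (2 * T) ^ k * k.factorial * exp (u ^ 2 / (2 * T)) := by
    have := pow_div_factorial_le_exp (u ^ 2 / (2 * T)) (by positivity) k
    rw [div_pow, div_div, div_le_iff₀ (by positivity)] at this
    linarith
  have h4 : exp (-u ^ 2 / (2 * T)) ≤ 1 := by
    rw [exp_le_one_iff, neg_div, neg_nonpos]
    positivity
  have h5 : exp (u ^ 2 / (2 * T)) * exp (-u ^ 2 / (2 * T)) = 1 := by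
    rw [← exp_add, neg_div, add_neg_cancel, exp_zero]
  have h6 := (exp_pos (-u ^ 2 / (2 * T))).le
  simp only [gaussWeight, abs_mul, abs_exp, abs_pow]
  calc |u| ^ k * exp (-u ^ 2 / (2 * T))
      ≤ (1 + (2 * T) ^ k * k.factorial * exp (u ^ 2 / (2 * T))) * exp (-u ^ 2 / (2 * T)) := by
        gcongr
        linarith
    _ = exp (-u ^ 2 / (2 * T)) + (2 * T) ^ k * k.factorial := by
        rw [add_mul, mul_assoc, h5]
        ring
    _ ≤ _ := by linarith

lemma hasDerivAt_gaussWeight (k : ℕ) (t u : ℝ) :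
    HasDerivAt (gaussWeight k t)
      (k * gaussWeight (k - 1) t u - gaussWeight (k + 1) t u / t) u := by
  have h : HasDerivAt (fun u : ℝ => -u ^ 2 / (2 * t)) (-(2 * u) / (2 * t)) u := by
    simpa using ((hasDerivAt_pow 2 u).neg.div_const (2 * t))
  refine ((hasDerivAt_pow k u).mul h.exp).congr_deriv ?_
  simp only [gaussWeight]
  rcases eq_or_ne t 0 with rfl | ht
  · simp
  · field_simp
    ring

lemma hasDerivAt_gaussWeight_time (k : ℕ) {t : ℝ} (ht : 0 < t) (u : ℝ) :
    HasDerivAt (fun t => gaussWeight k t u) (gaussWeight (k + 2) t u / (2 * t ^ 2)) t := by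
  have h : HasDerivAt (fun t : ℝ => -u ^ 2 / (2 * t)) (u ^ 2 / (2 * t ^ 2)) t := by
    refine ((hasDerivAt_const t (-u ^ 2)).div ((hasDerivAt_id t).const_mul 2)
      (by simpa using ht.ne')).congr_deriv ?_
    simp only [id]
    field_simp
    ring
  refine (h.exp.const_mul (u ^ k)).congr_deriv ?_
  simp only [gaussWeight]
  ring

lemma gaussMoment_nonneg {ν : Measure ℝ} {k : ℕ} (hk : Even k) (t w : ℝ) : 0 ≤ gaussMoment ν k t w :=
  integral_nonneg fun _ => mul_nonneg (hk.pow_nonneg _) (exp_pos _).le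

section Moment

variable {ν : Measure ℝ} [IsProbabilityMeasure ν]

lemma integrable_gaussWeight_sub (k : ℕ) {t : ℝ} (ht : 0 < t) (w : ℝ) :
    Integrable (fun x => gaussWeight k t (w - x)) ν := by
  obtain ⟨C, hC⟩ := exists_abs_gaussWeight_le k ht
  refine (integrable_const C).mono' ?_ (ae_of_all _ fun x => hC t _ ht le_rfl)
  exact ((continuous_gaussWeight k t).comp (by fun_prop)).aestronglyMeasurable

lemma hasDerivAt_gaussMoment (k : ℕ) {t : ℝ} (ht : 0 < t) (w : ℝ) :
    HasDerivAt (gaussMoment ν k t)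
      (k * gaussMoment ν (k - 1) t w - gaussMoment ν (k + 1) t w / t) w := by
  obtain ⟨C, hC⟩ := exists_abs_gaussWeight_le (k - 1) ht
  obtain ⟨D, hD⟩ := exists_abs_gaussWeight_le (k + 1) ht
  have hcont : ∀ j w, AEStronglyMeasurable (fun x => gaussWeight j t (w - x)) ν := fun j w =>
    ((continuous_gaussWeight j t).comp (by fun_prop)).aestronglyMeasurable
  have key := (hasDerivAt_integral_of_dominated_loc_of_deriv_le (μ := ν) (x₀ := w)
    (F := fun w x => gaussWeight k t (w - x))
    (F' := fun w x => k * gaussWeight (k - 1) t (w - x) - gaussWeight (k + 1) t (w - x) / t)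
    (bound := fun _ => k * C + D / t) Filter.univ_mem
    (Filter.Eventually.of_forall (hcont k)) (integrable_gaussWeight_sub k ht w)
    (((integrable_gaussWeight_sub _ ht w).const_mul _).sub
      ((integrable_gaussWeight_sub _ ht w).div_const _)).aestronglyMeasurable ?_ (integrable_const _) ?_).2
  · refine key.congr_deriv ?_
    rw [integral_sub ((integrable_gaussWeight_sub _ ht w).const_mul _)
      ((integrable_gaussWeight_sub _ ht w).div_const _), integral_const_mul, integral_div]
    rfl
  · refine ae_of_all _ fun x w _ => (norm_sub_le _ _).trans ?_
    rw [norm_mul, norm_div, norm_of_nonneg (Nat.cast_nonneg k), norm_of_nonneg ht.le, norm_eq_abs,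
      norm_eq_abs]
    gcongr
    · exact hC t _ ht le_rfl
    · exact hD t _ ht le_rfl
  · refine ae_of_all _ fun x w _ => ?_
    exact (hasDerivAt_gaussWeight k t (w - x)).comp_sub_const w x

lemma hasDerivAt_gaussMoment_time (k : ℕ) {t : ℝ} (ht : 0 < t) (w : ℝ) :
    HasDerivAt (fun t => gaussMoment ν k t w) (gaussMoment ν (k + 2) t w / (2 * t ^ 2)) t := by
  obtain ⟨C, hC⟩ := exists_abs_gaussWeight_le (k + 2) (T := 2 * t) (by positivity)
  have hcont : ∀ j t, AEStronglyMeasurable (fun x => gaussWeight j t (w - x)) ν := fun j t =>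
    ((continuous_gaussWeight j t).comp (by fun_prop)).aestronglyMeasurable
  have key := (hasDerivAt_integral_of_dominated_loc_of_deriv_le (μ := ν) (x₀ := t)
    (F := fun t x => gaussWeight k t (w - x))
    (F' := fun t x => gaussWeight (k + 2) t (w - x) / (2 * t ^ 2))
    (bound := fun _ => C / (2 * (t / 2) ^ 2))
    (Ioo_mem_nhds (show t / 2 < t by linarith) (show t < 2 * t by linarith))
    (Filter.Eventually.of_forall (hcont k)) (integrable_gaussWeight_sub k ht w)
    ((integrable_gaussWeight_sub _ ht w).div_const _).aestronglyMeasurable ?_ (integrable_const _) ?_).2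
  · refine key.congr_deriv ?_
    rw [integral_div]
    rfl
  · refine ae_of_all _ fun x s hs => ?_
    have hs0 : 0 < s := by linarith [hs.1]
    have hb := hC s (w - x) hs0 hs.2.le
    have hC0 : 0 ≤ C := (abs_nonneg _).trans hb
    have hs1 := hs.1.le
    rw [norm_div, norm_eq_abs, norm_of_nonneg (by positivity)]
    gcongr
  · exact ae_of_all _ fun x s hs => hasDerivAt_gaussWeight_time k (by linarith [hs.1]) _

lemma continuous_gaussMoment (k : ℕ) {t : ℝ} (ht : 0 < t) : Continuous (gaussMoment ν k t) :=
  continuous_iff_continuousAt.2 fun w => (hasDerivAt_gaussMoment k ht w).continuousAt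

lemma gaussMoment_zero_pos {t : ℝ} (ht : 0 < t) (w : ℝ) : 0 < gaussMoment ν 0 t w := by
  refine (integral_pos_iff_support_of_nonneg (fun x => ?_) (integrable_gaussWeight_sub 0 ht w)).2 ?_
  · simp only [gaussWeight, Pi.zero_apply]
    positivity
  · have : Function.support (fun x => gaussWeight 0 t (w - x)) = Set.univ := by
      ext x
      simp [gaussWeight, (exp_pos _).ne']
    rw [this]
    simp

lemma gaussMoment_mono {k : ℕ} (hk : Even k) {t T : ℝ} (ht : 0 < t) (htT : t ≤ T) (w : ℝ) :
    gaussMoment ν k t w ≤ gaussMoment ν k T w :=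
  integral_mono (integrable_gaussWeight_sub k ht w)
    (integrable_gaussWeight_sub k (ht.trans_le htT) w) fun _ => gaussWeight_mono hk ht htT _

/-- Cauchy-Schwarz for the smoothed moments. -/
lemma gaussMoment_sq_le (i j : ℕ) {t : ℝ} (ht : 0 < t) (w : ℝ) :
    gaussMoment ν (i + j) t w ^ 2 ≤ gaussMoment ν (2 * i) t w * gaussMoment ν (2 * j) t w := by
  have h := discrim_le_zero (a := gaussMoment ν (2 * i) t w) (b := 2 * gaussMoment ν (i + j) t w)
    (c := gaussMoment ν (2 * j) t w) fun y => ?_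
  · rw [discrim] at h
    linarith
  · have hi := fun k => integrable_gaussWeight_sub (ν := ν) k ht w
    have : gaussMoment ν (2 * i) t w * (y * y) + 2 * gaussMoment ν (i + j) t w * y
        + gaussMoment ν (2 * j) t w
        = ∫ x, ((y * y) * gaussWeight (2 * i) t (w - x) + (2 * y) * gaussWeight (i + j) t (w - x)
          + gaussWeight (2 * j) t (w - x)) ∂ν := by
      have hsum : Integrable (fun x => (y * y) * gaussWeight (2 * i) t (w - x)
          + (2 * y) * gaussWeight (i + j) t (w - x)) ν :=
        ((hi _).const_mul _).add ((hi _).const_mul _)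
      rw [integral_add hsum (hi _), integral_add ((hi _).const_mul _) ((hi _).const_mul _), integral_const_mul,
        integral_const_mul]
      simp only [gaussMoment]
      ring
    rw [this]
    refine integral_nonneg fun x => ?_
    have : (y * y) * gaussWeight (2 * i) t (w - x) + (2 * y) * gaussWeight (i + j) t (w - x)
          + gaussWeight (2 * j) t (w - x)
        = (y * (w - x) ^ i + (w - x) ^ j) ^ 2 * exp (-(w - x) ^ 2 / (2 * t)) := by
      simp only [gaussWeight]
      ring
    simp only [Pi.zero_apply, this]
    positivity

end Moment

lemma integrable_gaussWeight (k : ℕ) {t : ℝ} (ht : 0 < t) : Integrable (gaussWeight k t) := by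
  have h := integrable_rpow_mul_exp_neg_mul_sq (b := 1 / (2 * t)) (by positivity) (s := k)
    (by linarith [k.cast_nonneg (α := ℝ)])
  refine h.congr (ae_of_all _ fun u => ?_)
  simp only [gaussWeight, rpow_natCast]
  congr 2
  ring

/-- The normalising constant of the density of `N(0, t)`. -/
def gaussNorm (t : ℝ) : ℝ := (√(2 * π * t))⁻¹

lemma gaussNorm_pos {t : ℝ} (ht : 0 < t) : 0 < gaussNorm t := by
  unfold gaussNorm
  positivity

lemma hasDerivAt_gaussNorm {t : ℝ} (ht : 0 < t) :
    HasDerivAt gaussNorm (-gaussNorm t / (2 * t)) t := by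
  have hp : 0 < 2 * π * t := by positivity
  have hs : √(2 * π * t) ≠ 0 := by positivity
  refine ((((hasDerivAt_id t).const_mul (2 * π)).sqrt (by simpa using hp.ne')).inv
    (by simpa using hs)).congr_deriv ?_
  simp only [gaussNorm, id, mul_one]
  have := sq_sqrt hp.le
  field_simp
  rw [this]

lemma gaussianPDFReal_zero_eq {t : ℝ} (ht : 0 < t) (u : ℝ) :
    gaussianPDFReal 0 t.toNNReal u = gaussNorm t * gaussWeight 0 t u := by
  simp [gaussianPDFReal, gaussNorm, gaussWeight, ht.le]

lemma gaussNorm_mul_integral_gaussWeight_two {t : ℝ} (ht : 0 < t) :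
    gaussNorm t * ∫ u, gaussWeight 2 t u = t := by
  have h := variance_fun_id_gaussianReal (μ := 0) (v := t.toNNReal)
  rw [variance_eq_integral measurable_id'.aemeasurable, integral_id_gaussianReal,
    integral_gaussianReal_eq_integral_smul (by simpa using ht)] at h
  simp only [coe_toNNReal _ ht.le] at h
  rw [← integral_const_mul]
  refine Eq.trans (integral_congr_ae (ae_of_all _ fun u => ?_)) h
  simp only [gaussianPDFReal_zero_eq ht, gaussWeight, smul_eq_mul]
  ring

section MomentIntegral

variable {ν : Measure ℝ} [IsProbabilityMeasure ν]

lemma integrable_prod_gaussWeight (k : ℕ) {t : ℝ} (ht : 0 < t) :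
    Integrable (fun p : ℝ × ℝ => gaussWeight k t (p.2 - p.1)) (ν.prod volume) := by
  refine (integrable_prod_iff
    ((continuous_gaussWeight k t).comp (by fun_prop)).aestronglyMeasurable).2 ⟨ae_of_all _ fun x => (integrable_gaussWeight k ht).comp_sub_right x, ?_⟩
  simp only [Function.comp_apply]
  have : ∀ x : ℝ, ∫ w, ‖gaussWeight k t (w - x)‖ = ∫ w, ‖gaussWeight k t w‖ := fun x =>
    integral_sub_right_eq_self (fun w => ‖gaussWeight k t w‖) x
  simp only [this]
  exact integrable_const _

lemma integrable_gaussMoment (k : ℕ) {t : ℝ} (ht : 0 < t) : Integrable (gaussMoment ν k t) :=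
  (integrable_prod_gaussWeight k ht).integral_prod_right

lemma integral_gaussMoment (k : ℕ) {t : ℝ} (ht : 0 < t) :
    ∫ w, gaussMoment ν k t w = ∫ u, gaussWeight k t u := by
  have h := integrable_prod_gaussWeight (ν := ν) k ht
  have h1 := integral_prod_symm _ h
  rw [integral_prod _ h] at h1
  simp only [integral_sub_right_eq_self (gaussWeight k t)] at h1
  simpa [gaussMoment] using h1.symm

/-- The rational functions of the smoothed moments below are all dominated by the even moments. -/
lemma abs_moment_ratios_le {a b c d e : ℝ} (ha : 0 < a) (hc : 0 ≤ c) (he : 0 ≤ e)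
    (hb2 : b ^ 2 ≤ a * c) (hc2 : c ^ 2 ≤ a * e) (hd2 : d ^ 2 ≤ c * e) :
    |b ^ 2 / a| ≤ c ∧ |c ^ 2 / a| ≤ e ∧ |b * d / a| ≤ e ∧ |b ^ 2 * c / a ^ 2| ≤ e ∧
      |b ^ 4 / a ^ 3| ≤ e ∧ |b * c / a| ≤ c + e ∧ |b ^ 3 / a ^ 2| ≤ c + e := by
  have h1 : b ^ 2 / a ≤ c := by rwa [div_le_iff₀ ha, mul_comm]
  have h2 : c ^ 2 / a ≤ e := by rwa [div_le_iff₀ ha, mul_comm]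
  have h1' : 0 ≤ b ^ 2 / a := by positivity
  have h2' : 0 ≤ c ^ 2 / a := by positivity
  have hca : 0 ≤ c / a := by positivity
  have h4 : b ^ 2 * c / a ^ 2 ≤ e := by
    calc b ^ 2 * c / a ^ 2 = b ^ 2 / a * (c / a) := by field_simp
      _ ≤ c * (c / a) := by gcongr
      _ = c ^ 2 / a := by ring
      _ ≤ e := h2
  have hce : c * e ≤ (c + e) ^ 2 := by nlinarith
  have hsq : (b * c / a) ^ 2 ≤ c * e := by
    calc (b * c / a) ^ 2 = b ^ 2 / a * (c ^ 2 / a) := by field_simp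
      _ ≤ c * e := by gcongr
  refine ⟨by rwa [abs_of_nonneg h1'], by rwa [abs_of_nonneg h2'], ?_, ?_, ?_, ?_, ?_⟩
  · refine abs_le_of_sq_le_sq ?_ he
    calc (b * d / a) ^ 2 = b ^ 2 / a * d ^ 2 / a := by field_simp
      _ ≤ c * (c * e) / a := by gcongr
      _ = c ^ 2 / a * e := by ring
      _ ≤ e * e := by gcongr
      _ = e ^ 2 := by ring
  · rwa [abs_of_nonneg (by positivity)]
  · rw [abs_of_nonneg (by positivity)]
    calc b ^ 4 / a ^ 3 = b ^ 2 / a * (b ^ 2 / a) / a := by field_simp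
      _ ≤ c * c / a := by gcongr
      _ = c ^ 2 / a := by ring
      _ ≤ e := h2
  · exact abs_le_of_sq_le_sq (hsq.trans hce) (by positivity)
  · refine abs_le_of_sq_le_sq (le_trans ?_ hce) (by positivity)
    calc (b ^ 3 / a ^ 2) ^ 2 = b ^ 2 / a * (b ^ 2 / a) * (b ^ 2 / a) / a := by field_simp
      _ ≤ c * c * c / a := by gcongr
      _ = c * (c ^ 2 / a) := by ring
      _ ≤ c * e := by gcongr

lemma abs_gaussMoment_ratios_le {t : ℝ} (ht : 0 < t) (w : ℝ) :
    |gaussMoment ν 1 t w ^ 2 / gaussMoment ν 0 t w| ≤ gaussMoment ν 2 t w ∧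
    |gaussMoment ν 2 t w ^ 2 / gaussMoment ν 0 t w| ≤ gaussMoment ν 4 t w ∧
    |gaussMoment ν 1 t w * gaussMoment ν 3 t w / gaussMoment ν 0 t w| ≤ gaussMoment ν 4 t w ∧
    |gaussMoment ν 1 t w ^ 2 * gaussMoment ν 2 t w / gaussMoment ν 0 t w ^ 2|
      ≤ gaussMoment ν 4 t w ∧
    |gaussMoment ν 1 t w ^ 4 / gaussMoment ν 0 t w ^ 3| ≤ gaussMoment ν 4 t w ∧
    |gaussMoment ν 1 t w * gaussMoment ν 2 t w / gaussMoment ν 0 t w|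
      ≤ gaussMoment ν 2 t w + gaussMoment ν 4 t w ∧
    |gaussMoment ν 1 t w ^ 3 / gaussMoment ν 0 t w ^ 2|
      ≤ gaussMoment ν 2 t w + gaussMoment ν 4 t w :=
  abs_moment_ratios_le (gaussMoment_zero_pos ht w) (gaussMoment_nonneg (by decide) t w)
    (gaussMoment_nonneg (by decide) t w) (gaussMoment_sq_le 0 1 ht w) (gaussMoment_sq_le 0 2 ht w)
    (gaussMoment_sq_le 1 2 ht w)

lemma integrable_gaussMoment_ratios {t : ℝ} (ht : 0 < t) :
    Integrable (fun w => gaussMoment ν 1 t w ^ 2 / gaussMoment ν 0 t w) ∧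
    Integrable (fun w => gaussMoment ν 2 t w ^ 2 / gaussMoment ν 0 t w) ∧
    Integrable (fun w => gaussMoment ν 1 t w * gaussMoment ν 3 t w / gaussMoment ν 0 t w) ∧
    Integrable (fun w => gaussMoment ν 1 t w ^ 2 * gaussMoment ν 2 t w
      / gaussMoment ν 0 t w ^ 2) ∧
    Integrable (fun w => gaussMoment ν 1 t w ^ 4 / gaussMoment ν 0 t w ^ 3) ∧
    Integrable (fun w => gaussMoment ν 1 t w * gaussMoment ν 2 t w / gaussMoment ν 0 t w) ∧
    Integrable (fun w => gaussMoment ν 1 t w ^ 3 / gaussMoment ν 0 t w ^ 2) := by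
  have hK := fun k => continuous_gaussMoment (ν := ν) k ht
  have h0 := fun w => (gaussMoment_zero_pos (ν := ν) ht w).ne'
  have h2 := integrable_gaussMoment (ν := ν) 2 ht
  have h4 := integrable_gaussMoment (ν := ν) 4 ht
  have hb := abs_gaussMoment_ratios_le (ν := ν) ht
  refine ⟨h2.mono' ?_ (ae_of_all _ fun w => (hb w).1),
    h4.mono' ?_ (ae_of_all _ fun w => (hb w).2.1),
    h4.mono' ?_ (ae_of_all _ fun w => (hb w).2.2.1),
    h4.mono' ?_ (ae_of_all _ fun w => (hb w).2.2.2.1),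
    h4.mono' ?_ (ae_of_all _ fun w => (hb w).2.2.2.2.1),
    (h2.add h4).mono' ?_ (ae_of_all _ fun w => (hb w).2.2.2.2.2.1),
    (h2.add h4).mono' ?_ (ae_of_all _ fun w => (hb w).2.2.2.2.2.2)⟩ <;>
  refine Continuous.aestronglyMeasurable (Continuous.div ?_ ?_ fun w => ?_) <;>
  first
    | exact h0 w
    | exact pow_ne_zero _ (h0 w)
    | fun_prop (disch := assumption)

/-- Differentiation in time of `∫ K₁² / K₀`, where `Kₖ = gaussMoment ν k`. -/
lemma hasDerivAt_integral_gaussMoment_one_sq_div {t : ℝ} (ht : 0 < t) :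
    HasDerivAt (fun t => ∫ w, gaussMoment ν 1 t w ^ 2 / gaussMoment ν 0 t w)
      (∫ w, (2 * (gaussMoment ν 1 t w * gaussMoment ν 3 t w / gaussMoment ν 0 t w)
        - gaussMoment ν 1 t w ^ 2 * gaussMoment ν 2 t w / gaussMoment ν 0 t w ^ 2)
          / (2 * t ^ 2)) t := by
  obtain ⟨i1, -, i3, i4, -⟩ := integrable_gaussMoment_ratios (ν := ν) ht
  refine (hasDerivAt_integral_of_dominated_loc_of_deriv_le (x₀ := t)
    (F := fun t w => gaussMoment ν 1 t w ^ 2 / gaussMoment ν 0 t w)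
    (F' := fun t w => (2 * (gaussMoment ν 1 t w * gaussMoment ν 3 t w / gaussMoment ν 0 t w)
        - gaussMoment ν 1 t w ^ 2 * gaussMoment ν 2 t w / gaussMoment ν 0 t w ^ 2) / (2 * t ^ 2))
    (bound := fun w => 3 * gaussMoment ν 4 (2 * t) w / (2 * (t / 2) ^ 2))
    (Ioo_mem_nhds (show t / 2 < t by linarith) (show t < 2 * t by linarith))
    ?_ i1 (((i3.const_mul 2).sub i4).div_const _).aestronglyMeasurable ?_
    (((integrable_gaussMoment 4 (by positivity)).const_mul 3).div_const _) ?_).2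
  · filter_upwards [lt_mem_nhds ht] with s hs
    exact (integrable_gaussMoment_ratios hs).1.aestronglyMeasurable
  · refine ae_of_all _ fun w s hs => ?_
    have hs0 : 0 < s := by linarith [hs.1]
    have hs1 := hs.1.le
    obtain ⟨-, -, b3, b4, -⟩ := abs_gaussMoment_ratios_le (ν := ν) hs0 w
    have hm := gaussMoment_mono (ν := ν) (k := 4) (by decide) hs0 hs.2.le w
    have h40 := gaussMoment_nonneg (ν := ν) (k := 4) (by decide) (2 * t) w
    rw [norm_div, norm_of_nonneg (show 0 ≤ 2 * s ^ 2 by positivity)]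
    gcongr
    refine (norm_sub_le _ _).trans ?_
    rw [norm_mul, norm_eq_abs, norm_eq_abs, norm_eq_abs, abs_two]
    linarith
  · refine ae_of_all _ fun w s hs => ?_
    have hs0 : 0 < s := by linarith [hs.1]
    have d0 : HasDerivAt (fun t => gaussMoment ν 0 t w) (gaussMoment ν 2 s w / (2 * s ^ 2)) s :=
      hasDerivAt_gaussMoment_time 0 hs0 w
    have d1 : HasDerivAt (fun t => gaussMoment ν 1 t w) (gaussMoment ν 3 s w / (2 * s ^ 2)) s :=
      hasDerivAt_gaussMoment_time 1 hs0 w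
    have h0 := (gaussMoment_zero_pos (ν := ν) hs0 w).ne'
    refine ((d1.pow 2).div d0 h0).congr_deriv ?_
    simp only [Pi.pow_apply]
    field_simp
    ring

/-- The density form of `E[Var(U | X + U)²]` for independent `X ~ ν` and `U ~ N(0, t)`. -/
def condVarSqDensity (ν : Measure ℝ) (t : ℝ) : ℝ :=
  gaussNorm t * ∫ w, (gaussMoment ν 2 t w / gaussMoment ν 0 t w
    - (gaussMoment ν 1 t w / gaussMoment ν 0 t w) ^ 2) ^ 2 * gaussMoment ν 0 t w

/-- The density form of `E[Var(U | X + U)]` for independent `X ~ ν` and `U ~ N(0, t)`. -/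
def mmseDensity (ν : Measure ℝ) (t : ℝ) : ℝ :=
  t - gaussNorm t * ∫ w, gaussMoment ν 1 t w ^ 2 / gaussMoment ν 0 t w

lemma integral_combination_eq_zero {t : ℝ} (ht : 0 < t) :
    ∫ w, (t * gaussMoment ν 2 t w
      + t / 2 * (gaussMoment ν 1 t w ^ 2 / gaussMoment ν 0 t w)
      - gaussMoment ν 1 t w * gaussMoment ν 3 t w / gaussMoment ν 0 t w
      - gaussMoment ν 2 t w ^ 2 / gaussMoment ν 0 t w
      + 5 / 2 * (gaussMoment ν 1 t w ^ 2 * gaussMoment ν 2 t w / gaussMoment ν 0 t w ^ 2)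
      - gaussMoment ν 1 t w ^ 4 / gaussMoment ν 0 t w ^ 3) = 0 := by
  obtain ⟨i1, i2, i3, i4, i5, i6, i7⟩ := integrable_gaussMoment_ratios (ν := ν) ht
  have j2 := integrable_gaussMoment (ν := ν) 2 ht
  refine integral_eq_zero_of_hasDerivAt_of_integrable
    (f := fun w => t * (gaussMoment ν 1 t w * gaussMoment ν 2 t w / gaussMoment ν 0 t w)
      - t / 2 * (gaussMoment ν 1 t w ^ 3 / gaussMoment ν 0 t w ^ 2)) (fun w => ?_)
    ((((((j2.const_mul _).add (i1.const_mul _)).sub i3).sub i2).add (i4.const_mul _)).sub i5)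
    ((i6.const_mul _).sub (i7.const_mul _))
  have d0 : HasDerivAt (gaussMoment ν 0 t) (-(gaussMoment ν 1 t w / t)) w := by
    simpa using hasDerivAt_gaussMoment (ν := ν) 0 ht w
  have d1 : HasDerivAt (gaussMoment ν 1 t) (gaussMoment ν 0 t w - gaussMoment ν 2 t w / t) w := by
    simpa using hasDerivAt_gaussMoment (ν := ν) 1 ht w
  have d2 : HasDerivAt (gaussMoment ν 2 t)
      (2 * gaussMoment ν 1 t w - gaussMoment ν 3 t w / t) w := by
    simpa using hasDerivAt_gaussMoment (ν := ν) 2 ht w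
  have h0 := (gaussMoment_zero_pos (ν := ν) ht w).ne'
  refine ((((d1.mul d2).div d0 h0).const_mul t).sub
    (((d1.pow 3).div (d0.pow 2) (pow_ne_zero 2 h0)).const_mul (t / 2))).congr_deriv ?_
  simp only [Pi.mul_apply, Pi.pow_apply]
  field_simp
  ring

lemma hasDerivAt_mmseDensity {t : ℝ} (ht : 0 < t) :
    HasDerivAt (mmseDensity ν) (condVarSqDensity ν t / t ^ 2) t := by
  refine ((hasDerivAt_id t).sub ((hasDerivAt_gaussNorm ht).mul
    (hasDerivAt_integral_gaussMoment_one_sq_div (ν := ν) ht))).congr_deriv ?_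
  obtain ⟨i1, i2, i3, i4, i5, -, -⟩ := integrable_gaussMoment_ratios (ν := ν) ht
  have j2 := integrable_gaussMoment (ν := ν) 2 ht
  have hV : condVarSqDensity ν t = gaussNorm t *
      ((∫ w, gaussMoment ν 2 t w ^ 2 / gaussMoment ν 0 t w)
        - 2 * (∫ w, gaussMoment ν 1 t w ^ 2 * gaussMoment ν 2 t w / gaussMoment ν 0 t w ^ 2)
        + ∫ w, gaussMoment ν 1 t w ^ 4 / gaussMoment ν 0 t w ^ 3) := by
    have e := i2.sub (i4.const_mul 2)
    simp only [Pi.sub_def] at e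
    rw [condVarSqDensity, ← integral_const_mul 2, ← integral_sub i2 (i4.const_mul 2),
      ← integral_add e i5]
    congr 2
    ext w
    have h0 := (gaussMoment_zero_pos (ν := ν) ht w).ne'
    field_simp
    ring
  have hI := integral_combination_eq_zero (ν := ν) ht
  have hn := gaussNorm_mul_integral_gaussWeight_two ht
  rw [← integral_gaussMoment (ν := ν) 2 ht] at hn
  have e1 : Integrable (fun w => t * gaussMoment ν 2 t w
      + t / 2 * (gaussMoment ν 1 t w ^ 2 / gaussMoment ν 0 t w)) :=
    (j2.const_mul _).add (i1.const_mul _)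
  have e2 := e1.sub i3
  have e3 := e2.sub i2
  have e4 := e3.add (i4.const_mul (5 / 2))
  simp only [Pi.sub_def, Pi.add_def] at e2 e3 e4
  rw [integral_sub e4 i5, integral_add e3 (i4.const_mul _), integral_sub e2 i2, integral_sub e1 i3,
    integral_add (j2.const_mul _) (i1.const_mul _), integral_const_mul, integral_const_mul,
    integral_const_mul] at hI
  rw [hV, integral_div, integral_sub (i3.const_mul 2) i4, integral_const_mul]
  field_simp
  linear_combination (-2 * t) * hn + 2 * gaussNorm t * hI

end MomentIntegral

lemma integrable_noise_pow {Ω : Type*} [MeasurableSpace Ω] {μ : Measure Ω} {U : Ω → ℝ} {t : ℝ}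
    (ht : 0 < t) (hU : Measurable U)
    (hUlaw : μ.map U = gaussianReal 0 t.toNNReal) (k : ℕ) : Integrable (fun ω => U ω ^ k) μ := by
  refine (integrable_map_measure (f := U) (g := fun u => u ^ k) (by fun_prop)
    hU.aemeasurable).1 ?_
  rw [hUlaw, gaussianReal_of_var_ne_zero _ (by simpa using ht),
    integrable_withDensity_iff_integrable_smul' (by fun_prop)
      (ae_of_all _ fun _ => gaussianPDF_lt_top)]
  refine ((integrable_gaussWeight k ht).const_mul (gaussNorm t)).congr (ae_of_all _ fun u => ?_)
  simp only [toReal_gaussianPDF, gaussianPDFReal_zero_eq ht, gaussWeight, smul_eq_mul]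
  ring

section Observation

variable {Ω : Type*} [MeasurableSpace Ω] {μ : Measure Ω} [IsProbabilityMeasure μ]
  {X U : Ω → ℝ} {t : ℝ}

/-- Joint density of `(X, X + U)` with respect to the product of the law of `X` and Lebesgue
measure, for a Gaussian `U` independent of `X`. -/
lemma map_signal_obs (ht : 0 < t) (hX : Measurable X) (hU : Measurable U)
    (hUlaw : μ.map U = gaussianReal 0 t.toNNReal) (hind : IndepFun X U μ) :
    μ.map (fun ω => (X ω, X ω + U ω)) = ((μ.map X).prod volume).withDensity
      (fun p => ENNReal.ofReal (gaussNorm t * gaussWeight 0 t (p.2 - p.1))) := by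
  have : IsProbabilityMeasure (μ.map X) := Measure.isProbabilityMeasure_map hX.aemeasurable
  have hcont := continuous_gaussWeight 0 t
  have hg : Measurable fun u => ENNReal.ofReal (gaussNorm t * gaussWeight 0 t u) := by fun_prop
  have hlaw : μ.map (fun ω => (X ω, U ω)) = ((μ.map X).prod volume).withDensity
      (fun p => ENNReal.ofReal (gaussNorm t * gaussWeight 0 t p.2)) := by
    rw [(indepFun_iff_map_prod_eq_prod_map_map hX.aemeasurable hU.aemeasurable).1 hind, hUlaw,
      gaussianReal_of_var_ne_zero _ (by simpa using ht)]
    have : gaussianPDF 0 t.toNNReal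
        = fun u => ENNReal.ofReal (gaussNorm t * gaussWeight 0 t u) := by
      ext u
      rw [gaussianPDF, gaussianPDFReal_zero_eq ht]
    rw [this, prod_withDensity_right hg]
  have hshear : Measurable fun p : ℝ × ℝ => (p.1, p.1 + p.2) := by fun_prop
  have hmap : μ.map (fun ω => (X ω, X ω + U ω))
      = (μ.map fun ω => (X ω, U ω)).map fun p : ℝ × ℝ => (p.1, p.1 + p.2) := by
    rw [Measure.map_map hshear (hX.prodMk hU)]
    rfl
  rw [hmap, hlaw]
  refine Measure.ext_of_lintegral _ fun f hf => ?_
  rw [lintegral_map hf hshear, lintegral_withDensity_eq_lintegral_mul _ (by fun_prop)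
    (by fun_prop), lintegral_withDensity_eq_lintegral_mul _ (by fun_prop) hf]
  refine Eq.trans ?_
    ((measurePreserving_prod_add (μ.map X) volume).lintegral_comp (by fun_prop))
  simp

lemma map_obs (ht : 0 < t) (hX : Measurable X) (hU : Measurable U)
    (hUlaw : μ.map U = gaussianReal 0 t.toNNReal) (hind : IndepFun X U μ) :
    μ.map (fun ω => X ω + U ω) = volume.withDensity
      (fun w => ENNReal.ofReal (gaussNorm t * gaussMoment (μ.map X) 0 t w)) := by
  have : IsProbabilityMeasure (μ.map X) := Measure.isProbabilityMeasure_map hX.aemeasurable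
  have hcont := continuous_gaussWeight 0 t
  have hK := continuous_gaussMoment (ν := μ.map X) 0 ht
  have hmap : μ.map (fun ω => X ω + U ω) = (μ.map fun ω => (X ω, X ω + U ω)).map Prod.snd := by
    rw [Measure.map_map measurable_snd (by fun_prop)]
    rfl
  rw [hmap, map_signal_obs ht hX hU hUlaw hind]
  refine Measure.ext_of_lintegral _ fun f hf => ?_
  rw [lintegral_map hf measurable_snd, lintegral_withDensity_eq_lintegral_mul _ (by fun_prop)
    (by fun_prop), lintegral_withDensity_eq_lintegral_mul _ (by fun_prop) hf,
    lintegral_prod_symm' _ (by fun_prop)]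
  refine lintegral_congr fun w => ?_
  simp only [Pi.mul_apply]
  rw [lintegral_mul_const _ (by fun_prop), gaussMoment, ← integral_const_mul,
    ofReal_integral_eq_lintegral_ofReal ((integrable_gaussWeight_sub 0 ht w).const_mul _)]
  refine ae_of_all _ fun x => ?_
  have := (gaussNorm_pos ht).le
  simp only [gaussWeight, Pi.zero_apply]
  positivity

lemma integral_comp_obs (ht : 0 < t) (hX : Measurable X) (hU : Measurable U)
    (hUlaw : μ.map U = gaussianReal 0 t.toNNReal) (hind : IndepFun X U μ) {h : ℝ → ℝ}
    (hh : Measurable h) :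
    ∫ ω, h (X ω + U ω) ∂μ = gaussNorm t * ∫ w, h w * gaussMoment (μ.map X) 0 t w := by
  have : IsProbabilityMeasure (μ.map X) := Measure.isProbabilityMeasure_map hX.aemeasurable
  have hK := continuous_gaussMoment (ν := μ.map X) 0 ht
  rw [← integral_map (φ := fun ω => X ω + U ω) (by fun_prop) hh.aestronglyMeasurable,
    map_obs ht hX hU hUlaw hind,
    integral_withDensity_eq_integral_toReal_smul (by fun_prop) (by simp),
    ← integral_const_mul]
  refine integral_congr_ae (ae_of_all _ fun w => ?_)
  have h1 := (gaussNorm_pos ht).le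
  have h2 := (gaussMoment_zero_pos (ν := μ.map X) ht w).le
  simp only [smul_eq_mul]
  rw [ENNReal.toReal_ofReal (by positivity)]
  ring

lemma integrable_comp_obs (ht : 0 < t) (hX : Measurable X) (hU : Measurable U)
    (hUlaw : μ.map U = gaussianReal 0 t.toNNReal) (hind : IndepFun X U μ) {h : ℝ → ℝ}
    (hh : Measurable h) (h_int : Integrable fun w => h w * gaussMoment (μ.map X) 0 t w) :
    Integrable (fun ω => h (X ω + U ω)) μ := by
  have : IsProbabilityMeasure (μ.map X) := Measure.isProbabilityMeasure_map hX.aemeasurable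
  have hK := continuous_gaussMoment (ν := μ.map X) 0 ht
  refine (integrable_map_measure (f := fun ω => X ω + U ω) hh.aestronglyMeasurable
    (by fun_prop)).1 ?_
  rw [map_obs ht hX hU hUlaw hind, integrable_withDensity_iff_integrable_smul' (by fun_prop)
    (by simp)]
  refine (h_int.const_mul (gaussNorm t)).congr (ae_of_all _ fun w => ?_)
  have h1 := (gaussNorm_pos ht).le
  have h2 := (gaussMoment_zero_pos (ν := μ.map X) ht w).le
  simp only [smul_eq_mul]
  rw [ENNReal.toReal_ofReal (by positivity)]
  ring

lemma setIntegral_noise_pow (ht : 0 < t) (hX : Measurable X) (hU : Measurable U)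
    (hUlaw : μ.map U = gaussianReal 0 t.toNNReal) (hind : IndepFun X U μ) (k : ℕ)
    {B : Set ℝ} (hB : MeasurableSet B) :
    ∫ ω in (fun ω => X ω + U ω) ⁻¹' B, U ω ^ k ∂μ
      = gaussNorm t * ∫ w in B, gaussMoment (μ.map X) k t w := by
  have : IsProbabilityMeasure (μ.map X) := Measure.isProbabilityMeasure_map hX.aemeasurable
  have hcont := continuous_gaussWeight 0 t
  have hBs : MeasurableSet (Prod.snd ⁻¹' B : Set (ℝ × ℝ)) := measurable_snd hB
  let G : ℝ × ℝ → ℝ := (Prod.snd ⁻¹' B).indicator fun p => (p.2 - p.1) ^ k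
  have hG : Measurable G := Measurable.indicator (by fun_prop) hBs
  have h1 : ∫ ω in (fun ω => X ω + U ω) ⁻¹' B, U ω ^ k ∂μ = ∫ ω, G (X ω, X ω + U ω) ∂μ := by
    have hW : Measurable fun ω => X ω + U ω := hX.add hU
    rw [← integral_indicator (hW hB)]
    refine integral_congr_ae (ae_of_all _ fun ω => ?_)
    by_cases hω : X ω + U ω ∈ B <;> simp [G, Set.indicator, hω]
  rw [h1, ← integral_map (φ := fun ω => (X ω, X ω + U ω)) (by fun_prop) hG.aestronglyMeasurable,
    map_signal_obs ht hX hU hUlaw hind,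
    integral_withDensity_eq_integral_toReal_smul (by fun_prop) (by simp)]
  have h2 : ∀ p : ℝ × ℝ, (ENNReal.ofReal (gaussNorm t * gaussWeight 0 t (p.2 - p.1))).toReal • G p
      = (Prod.snd ⁻¹' B).indicator (fun p => gaussNorm t * gaussWeight k t (p.2 - p.1)) p := by
    intro p
    have := (gaussNorm_pos ht).le
    rw [ENNReal.toReal_ofReal (by simp only [gaussWeight]; positivity)]
    by_cases hp : p.2 ∈ B
    · simp only [G, Set.indicator, Set.mem_preimage, hp, if_true, gaussWeight, smul_eq_mul]
      ring
    · simp [G, Set.indicator, hp]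
  have h_int := (((integrable_prod_gaussWeight (ν := μ.map X) k ht).const_mul
    (gaussNorm t)).indicator hBs)
  simp only [h2]
  rw [integral_prod_symm _ h_int, ← integral_indicator hB, ← integral_const_mul]
  refine integral_congr_ae (ae_of_all _ fun w => ?_)
  by_cases hw : w ∈ B
  · simp [Set.indicator, hw, gaussMoment, integral_const_mul]
  · simp [Set.indicator, hw]

/-- The Bayes formula for the conditional moments of the noise given the observation. -/
lemma condExp_noise_pow (ht : 0 < t) (hX : Measurable X) (hU : Measurable U)
    (hUlaw : μ.map U = gaussianReal 0 t.toNNReal) (hind : IndepFun X U μ) (k : ℕ) :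
    μ[fun ω => U ω ^ k | MeasurableSpace.comap (fun ω => X ω + U ω) inferInstance] =ᵐ[μ]
      fun ω => gaussMoment (μ.map X) k t (X ω + U ω) / gaussMoment (μ.map X) 0 t (X ω + U ω) := by
  have : IsProbabilityMeasure (μ.map X) := Measure.isProbabilityMeasure_map hX.aemeasurable
  have hK := fun k => (continuous_gaussMoment (ν := μ.map X) k ht).measurable
  have h0 := fun w => (gaussMoment_zero_pos (ν := μ.map X) ht w).ne'
  let r : ℝ → ℝ := fun w => gaussMoment (μ.map X) k t w / gaussMoment (μ.map X) 0 t w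
  have hr : Measurable r := (hK k).div (hK 0)
  have hrK : ∀ w, r w * gaussMoment (μ.map X) 0 t w = gaussMoment (μ.map X) k t w := fun w =>
    div_mul_cancel₀ _ (h0 w)
  have hrint : Integrable (fun ω => r (X ω + U ω)) μ := by
    refine integrable_comp_obs ht hX hU hUlaw hind hr ?_
    simp only [hrK]
    exact integrable_gaussMoment k ht
  have hW : Measurable fun ω => X ω + U ω := hX.add hU
  refine (ae_eq_condExp_of_forall_setIntegral_eq hW.comap_le
    (integrable_noise_pow ht hU hUlaw k) (fun s _ _ => hrint.integrableOn) ?_ ?_).symm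
  · rintro s ⟨B, hB, rfl⟩ -
    rw [setIntegral_noise_pow ht hX hU hUlaw hind k hB, ← integral_indicator (hW hB),
      ← integral_indicator hB]
    have := integral_comp_obs ht hX hU hUlaw hind (hr.indicator hB)
    refine Eq.trans (integral_congr_ae (ae_of_all _ fun ω => ?_)) (this.trans ?_)
    · by_cases hω : X ω + U ω ∈ B <;> simp [Set.indicator, hω, r]
    · congr 2
      ext w
      by_cases hw : w ∈ B
      · simp only [Set.indicator, hw, if_true, hrK]
      · simp [Set.indicator, hw]
  · exact (hr.comp (comap_measurable _)).stronglyMeasurable.aestronglyMeasurable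

end Observation

section ConditionalVariance

variable {Ω : Type*} {m : MeasurableSpace Ω} [m₀ : MeasurableSpace Ω] {μ : Measure Ω}
  [IsProbabilityMeasure μ] {X U : Ω → ℝ}

lemma condVarS_ae_eq_condVar (hm : m ≤ m₀) (hX : MemLp X 2 μ) :
    condVarS m μ X =ᵐ[μ] Var[X; μ | m] :=
  (condVar_ae_eq_condExp_sq_sub_sq_condExp hm hX).symm

/-- If `X + U` is observed, then `X` and `-U` have the same estimation error. -/
lemma sub_condExp_sq_ae_eq (hm : m ≤ m₀) (hX : Integrable X μ) (hU : Integrable U μ)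
    (hXU : StronglyMeasurable[m] (X + U)) :
    (X - μ[X | m]) ^ 2 =ᵐ[μ] (U - μ[U | m]) ^ 2 := by
  have h := condExp_add hX hU m
  rw [condExp_of_stronglyMeasurable hm hXU (hX.add hU)] at h
  filter_upwards [h] with ω hω
  simp only [Pi.add_apply, Pi.pow_apply, Pi.sub_apply] at hω ⊢
  have : X ω - (μ[X | m]) ω = -(U ω - (μ[U | m]) ω) := by linarith
  rw [this, neg_sq]

lemma integral_condVarS_sq_le (hm : m ≤ m₀) (hXm : Measurable X) (hX : MemLp X 2 μ) :
    ENNReal.ofReal (∫ ω, condVarS m μ X ω ^ 2 ∂μ) ≤ ∫⁻ ω, ENNReal.ofReal (X ω ^ 4) ∂μ := by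
  by_cases htop : ∫⁻ ω, ENNReal.ofReal (X ω ^ 4) ∂μ = ∞
  · simp [htop]
  have h4 : Integrable (fun ω => X ω ^ 4) μ := by
    refine ⟨by fun_prop, ?_⟩
    rw [hasFiniteIntegral_iff_ofReal (ae_of_all _ fun ω => by positivity)]
    exact lt_top_iff_ne_top.2 htop
  have hsq : MemLp (fun ω => X ω ^ 2) 2 μ := by
    rw [memLp_two_iff_integrable_sq (by fun_prop)]
    refine h4.congr (ae_of_all _ fun ω => ?_)
    ring
  have hpow : (fun ω => X ω ^ 2) ^ 2 = fun ω => X ω ^ 4 := by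
    ext ω
    simp only [Pi.pow_apply]
    ring
  rw [← ofReal_integral_eq_lintegral_ofReal h4 (ae_of_all _ fun ω => by positivity)]
  refine ENNReal.ofReal_le_ofReal ?_
  rw [← integral_condExp hm (f := fun ω => X ω ^ 4)]
  refine integral_mono_of_nonneg (ae_of_all _ fun ω => sq_nonneg _) integrable_condExp ?_
  have hV : 0 ≤ᵐ[μ] Var[X; μ | m] := condExp_nonneg (ae_of_all _ fun ω => sq_nonneg _)
  have hV2 : 0 ≤ᵐ[μ] Var[fun ω => X ω ^ 2; μ | m] :=
    condExp_nonneg (ae_of_all _ fun ω => sq_nonneg _)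
  have hV2eq := condVar_ae_eq_condExp_sq_sub_sq_condExp hm hsq
  rw [hpow] at hV2eq
  filter_upwards [hV, hV2, hV2eq, condVarS_ae_eq_condVar hm hX] with ω h1 h2 h3 h5
  rw [← h5] at h1
  simp only [Pi.zero_apply, Pi.sub_apply, Pi.pow_apply] at h1 h2 h3
  have hle : condVarS m μ X ω ≤ (μ[fun ω => X ω ^ 2 | m]) ω := by
    simp only [condVarS]
    nlinarith [sq_nonneg ((μ[X | m]) ω)]
  calc condVarS m μ X ω ^ 2 ≤ (μ[fun ω => X ω ^ 2 | m]) ω ^ 2 := by gcongr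
    _ ≤ (μ[fun ω => X ω ^ 4 | m]) ω := by linarith

end ConditionalVariance

lemma map_scaled_noise {Ω : Type*} [MeasurableSpace Ω] {μ : Measure Ω} {Z : Ω → ℝ}
    (hZ : Measurable Z) (hZlaw : μ.map Z = gaussianReal 0 1) {s : ℝ} (hs : 0 < s) :
    μ.map (fun ω => (√s)⁻¹ * Z ω) = gaussianReal 0 (s⁻¹).toNNReal := by
  have h := gaussianReal_map_const_mul (μ := 0) (v := 1) (√s)⁻¹
  rw [← hZlaw, Measure.map_map (by fun_prop) hZ] at h
  refine Eq.trans h ?_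
  congr 1
  · simp
  · ext
    simp [hs.le]

section Channel

variable {Ω : Type*} [MeasurableSpace Ω] {μ : Measure Ω} [IsProbabilityMeasure μ] {X Z : Ω → ℝ}

lemma obsSigmaS_eq_comap (X Z : Ω → ℝ) {s : ℝ} (hs : 0 < s) :
    obsSigmaS X Z s = MeasurableSpace.comap (fun ω => X ω + (√s)⁻¹ * Z ω) inferInstance := by
  have hs' : √s ≠ 0 := by positivity
  have : obsS X Z s = (fun y => √s * y) ∘ fun ω => X ω + (√s)⁻¹ * Z ω := by
    ext ω
    simp only [obsS, Function.comp_apply]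
    field_simp
  rw [obsSigmaS, this, ← MeasurableSpace.comap_comp]
  congr 1
  exact (measurableEmbedding_mulLeft₀ hs').comap_eq

lemma obsSigmaS_le (hX : Measurable X) (hZ : Measurable Z) (s : ℝ) :
    obsSigmaS X Z s ≤ ‹MeasurableSpace Ω› :=
  Measurable.comap_le ((hX.const_mul _).add hZ)

/-- The conditional variance of `X` given `Y_s` in terms of the smoothed moments. -/
lemma condVarS_obs_ae_eq (hX : Measurable X) (hZ : Measurable Z)
    (hZlaw : μ.map Z = gaussianReal 0 1) (hindep : IndepFun X Z μ)
    (hX2 : Integrable (fun ω => X ω ^ 2) μ) {s : ℝ} (hs : 0 < s) :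
    condVarS (obsSigmaS X Z s) μ X =ᵐ[μ] fun ω =>
      gaussMoment (μ.map X) 2 s⁻¹ (X ω + (√s)⁻¹ * Z ω)
          / gaussMoment (μ.map X) 0 s⁻¹ (X ω + (√s)⁻¹ * Z ω)
        - (gaussMoment (μ.map X) 1 s⁻¹ (X ω + (√s)⁻¹ * Z ω)
          / gaussMoment (μ.map X) 0 s⁻¹ (X ω + (√s)⁻¹ * Z ω)) ^ 2 := by
  have ht : 0 < s⁻¹ := inv_pos.2 hs
  have hm := obsSigmaS_le hX hZ s
  have hXL : MemLp X 2 μ := (memLp_two_iff_integrable_sq hX.aestronglyMeasurable).2 hX2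
  let U : Ω → ℝ := fun ω => (√s)⁻¹ * Z ω
  have hU : Measurable U := hZ.const_mul _
  have hUlaw : μ.map U = gaussianReal 0 (s⁻¹).toNNReal := map_scaled_noise hZ hZlaw hs
  have hind : IndepFun X U μ := hindep.comp measurable_id (measurable_const_mul (√s)⁻¹)
  have hUL : MemLp U 2 μ := (memLp_two_iff_integrable_sq hU.aestronglyMeasurable).2
    (integrable_noise_pow ht hU hUlaw 2)
  have hXU : StronglyMeasurable[obsSigmaS X Z s] (X + U) := by
    rw [obsSigmaS_eq_comap X Z hs]
    exact (comap_measurable (fun ω => X ω + (√s)⁻¹ * Z ω)).stronglyMeasurable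
  have h1 := condExp_noise_pow ht hX hU hUlaw hind 1
  have h2 := condExp_noise_pow ht hX hU hUlaw hind 2
  rw [← obsSigmaS_eq_comap X Z hs] at h1 h2
  have h3 : Var[X; μ | obsSigmaS X Z s] =ᵐ[μ] Var[U; μ | obsSigmaS X Z s] :=
    condExp_congr_ae (sub_condExp_sq_ae_eq hm (hXL.integrable one_le_two)
      (hUL.integrable one_le_two) hXU)
  filter_upwards [condVarS_ae_eq_condVar hm hXL, h3,
    condVar_ae_eq_condExp_sq_sub_sq_condExp hm hUL, h1, h2] with ω e1 e2 e3 e4 e5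
  simp only [pow_one] at e4
  rw [e1, e2, e3, ← e4, ← e5]
  rfl

lemma mmseS_eq_integral_condVarS (hX : Measurable X) (hZ : Measurable Z)
    (hX2 : Integrable (fun ω => X ω ^ 2) μ) (s : ℝ) :
    mmseS μ X Z s = ∫ ω, condVarS (obsSigmaS X Z s) μ X ω ∂μ := by
  have hXL : MemLp X 2 μ := (memLp_two_iff_integrable_sq hX.aestronglyMeasurable).2 hX2
  rw [integral_congr_ae (condVarS_ae_eq_condVar (obsSigmaS_le hX hZ s) hXL), condVar,
    integral_condExp (obsSigmaS_le hX hZ s)]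
  rfl

lemma varSq_eq_condVarSqDensity (hX : Measurable X) (hZ : Measurable Z)
    (hZlaw : μ.map Z = gaussianReal 0 1) (hindep : IndepFun X Z μ)
    (hX2 : Integrable (fun ω => X ω ^ 2) μ) {s : ℝ} (hs : 0 < s) :
    varSq μ X Z s = condVarSqDensity (μ.map X) s⁻¹ := by
  have : IsProbabilityMeasure (μ.map X) := Measure.isProbabilityMeasure_map hX.aemeasurable
  have ht : 0 < s⁻¹ := inv_pos.2 hs
  have hK := fun k => (continuous_gaussMoment (ν := μ.map X) k ht).measurable
  have hmeas : Measurable fun w => (gaussMoment (μ.map X) 2 s⁻¹ w / gaussMoment (μ.map X) 0 s⁻¹ w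
      - (gaussMoment (μ.map X) 1 s⁻¹ w / gaussMoment (μ.map X) 0 s⁻¹ w) ^ 2) ^ 2 :=
    (((hK 2).div (hK 0)).sub (((hK 1).div (hK 0)).pow_const 2)).pow_const 2
  rw [condVarSqDensity, ← integral_comp_obs ht hX (hZ.const_mul (√s)⁻¹)
    (map_scaled_noise hZ hZlaw hs) (hindep.comp measurable_id (measurable_const_mul (√s)⁻¹)) hmeas]
  refine integral_congr_ae ?_
  filter_upwards [condVarS_obs_ae_eq hX hZ hZlaw hindep hX2 hs] with ω hω
  rw [hω]

lemma mmseS_eq_mmseDensity (hX : Measurable X) (hZ : Measurable Z)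
    (hZlaw : μ.map Z = gaussianReal 0 1) (hindep : IndepFun X Z μ)
    (hX2 : Integrable (fun ω => X ω ^ 2) μ) {s : ℝ} (hs : 0 < s) :
    mmseS μ X Z s = mmseDensity (μ.map X) s⁻¹ := by
  have : IsProbabilityMeasure (μ.map X) := Measure.isProbabilityMeasure_map hX.aemeasurable
  have ht : 0 < s⁻¹ := inv_pos.2 hs
  have hK := fun k => (continuous_gaussMoment (ν := μ.map X) k ht).measurable
  have hmeas : Measurable fun w => gaussMoment (μ.map X) 2 s⁻¹ w / gaussMoment (μ.map X) 0 s⁻¹ w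
      - (gaussMoment (μ.map X) 1 s⁻¹ w / gaussMoment (μ.map X) 0 s⁻¹ w) ^ 2 :=
    ((hK 2).div (hK 0)).sub (((hK 1).div (hK 0)).pow_const 2)
  rw [mmseS_eq_integral_condVarS hX hZ hX2,
    integral_congr_ae (condVarS_obs_ae_eq hX hZ hZlaw hindep hX2 hs)]
  refine (integral_comp_obs ht hX (hZ.const_mul (√s)⁻¹) (map_scaled_noise hZ hZlaw hs)
    (hindep.comp measurable_id (measurable_const_mul (√s)⁻¹)) hmeas).trans ?_
  have hn := gaussNorm_mul_integral_gaussWeight_two ht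
  rw [← integral_gaussMoment (ν := μ.map X) 2 ht] at hn
  have key : ∀ w, (gaussMoment (μ.map X) 2 s⁻¹ w / gaussMoment (μ.map X) 0 s⁻¹ w
      - (gaussMoment (μ.map X) 1 s⁻¹ w / gaussMoment (μ.map X) 0 s⁻¹ w) ^ 2)
        * gaussMoment (μ.map X) 0 s⁻¹ w
      = gaussMoment (μ.map X) 2 s⁻¹ w
        - gaussMoment (μ.map X) 1 s⁻¹ w ^ 2 / gaussMoment (μ.map X) 0 s⁻¹ w := fun w => by
    have h0 := (gaussMoment_zero_pos (ν := μ.map X) ht w).ne'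
    generalize gaussMoment (μ.map X) 0 s⁻¹ w = a at h0 ⊢
    field_simp
  simp only [key]
  rw [integral_sub (integrable_gaussMoment 2 ht) (integrable_gaussMoment_ratios ht).1, mul_sub, hn,
    mmseDensity]

/-- The derivative of the MMSE in the signal-to-noise ratio is `-E[Var(X | Y_s)²]`. -/
lemma hasDerivAt_mmseS (hX : Measurable X) (hZ : Measurable Z)
    (hZlaw : μ.map Z = gaussianReal 0 1) (hindep : IndepFun X Z μ)
    (hX2 : Integrable (fun ω => X ω ^ 2) μ) {s : ℝ} (hs : 0 < s) :
    HasDerivAt (mmseS μ X Z) (-varSq μ X Z s) s := by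
  have : IsProbabilityMeasure (μ.map X) := Measure.isProbabilityMeasure_map hX.aemeasurable
  have h := (hasDerivAt_mmseDensity (ν := μ.map X) (inv_pos.2 hs)).comp s (hasDerivAt_inv hs.ne')
  rw [← varSq_eq_condVarSqDensity hX hZ hZlaw hindep hX2 hs] at h
  refine (h.congr_deriv ?_).congr_of_eventuallyEq ?_
  · field_simp
  · filter_upwards [lt_mem_nhds hs] with r hr
    exact mmseS_eq_mmseDensity hX hZ hZlaw hindep hX2 hr

end Channel

/-- **Proposition 13 (mean-value representation of the MMSE drop).**
For `0 < snr < snr0` there is `snr_c ∈ (snr, snr0)` with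
`mmse(X, snr) − mmse(X, snr0) = E[(Var(X|Y_{snr_c}))²]·(snr0 − snr)`, and
`E[(Var(X|Y_{snr_c}))²] ≤ sup_{γ ∈ (snr, snr0)} E[(Var(X|Y_γ))²] ≤ E[X⁴]`
(the last bounds in the extended reals, since `E[X⁴]` may be infinite). -/
theorem mmse_drop_mean_value {Ω : Type*} [MeasurableSpace Ω] (μ : Measure Ω)
    [IsProbabilityMeasure μ] (X Z : Ω → ℝ)
    (hX : Measurable X) (hZ : Measurable Z)
    (hZlaw : Measure.map Z μ = gaussianReal 0 1)
    (hindep : IndepFun X Z μ)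
    (hX2 : Integrable (fun ω => (X ω) ^ 2) μ)
    (snr snr0 : ℝ) (hsnr : 0 < snr) (hlt : snr < snr0) :
    ∃ snrc ∈ Set.Ioo snr snr0,
      mmseS μ X Z snr - mmseS μ X Z snr0 = varSq μ X Z snrc * (snr0 - snr) ∧
      ENNReal.ofReal (varSq μ X Z snrc)
        ≤ ⨆ γ ∈ Set.Ioo snr snr0, ENNReal.ofReal (varSq μ X Z γ) ∧
      (⨆ γ ∈ Set.Ioo snr snr0, ENNReal.ofReal (varSq μ X Z γ))
        ≤ ∫⁻ ω, ENNReal.ofReal ((X ω) ^ 4) ∂μ := by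
  obtain ⟨c, hc, hslope⟩ := exists_hasDerivAt_eq_slope (mmseS μ X Z) (fun s => -varSq μ X Z s) hlt
    (fun s hs => (hasDerivAt_mmseS hX hZ hZlaw hindep hX2
      (hsnr.trans_le hs.1)).continuousAt.continuousWithinAt)
    (fun s hs => hasDerivAt_mmseS hX hZ hZlaw hindep hX2 (hsnr.trans hs.1))
  refine ⟨c, hc, ?_, le_iSup₂ (f := fun γ (_ : γ ∈ Set.Ioo snr snr0) =>
    ENNReal.ofReal (varSq μ X Z γ)) c hc, iSup₂_le fun γ _ => ?_⟩
  · rw [eq_div_iff (sub_pos.2 hlt).ne'] at hslope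
    linarith
  · exact integral_condVarS_sq_le (obsSigmaS_le hX hZ γ) hX
      ((memLp_two_iff_integrable_sq hX.aestronglyMeasurable).2 hX2)

end
end

section
/- (Appendix E trace inequality for conditional covariances.) Let V be a random vector in ℝⁿ with E[‖V‖⁴] < ∞ and let G be a sub-σ-algebra of the underlying σ-algebra. Then Tr( E[ (Cov(V|G))² ] ) ≤ Tr( E[ (E[V Vᵀ|G])² ] ) − Tr( E[ (E[V|G]·E[V|G]ᵀ)² ] ). -/
open MeasureTheory ProbabilityTheory Real Matrix

noncomputable section

/-- The observation `Y_snr = √snr · X + Z` as a random vector in `ℝⁿ` (modeled as `Fin n → ℝ`). -/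
def obs {Ω : Type*} {n : ℕ} (X Z : Ω → Fin n → ℝ) (snr : ℝ) : Ω → Fin n → ℝ :=
  fun ω i => Real.sqrt snr * X ω i + Z ω i

/-- The σ-algebra generated by the observation `Y_snr`. -/
def obsSigma {Ω : Type*} [MeasurableSpace Ω] {n : ℕ} (X Z : Ω → Fin n → ℝ) (snr : ℝ) :
    MeasurableSpace Ω :=
  MeasurableSpace.comap (obs X Z snr) inferInstance

/-- Componentwise conditional expectation of a random vector given a sub-σ-algebra `m`. -/
def ceVec {Ω : Type*} {n : ℕ} (m : MeasurableSpace Ω) [MeasurableSpace Ω] (μ : Measure Ω)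
    (V : Ω → Fin n → ℝ) : Ω → Fin n → ℝ :=
  fun ω i => (μ[fun ω' => V ω' i | m]) ω

/-- Entrywise conditional expectation of a random matrix given a sub-σ-algebra `m`. -/
def ceMat {Ω : Type*} {n : ℕ} (m : MeasurableSpace Ω) [MeasurableSpace Ω] (μ : Measure Ω)
    (M : Ω → Matrix (Fin n) (Fin n) ℝ) : Ω → Matrix (Fin n) (Fin n) ℝ :=
  fun ω => Matrix.of fun i j => (μ[fun ω' => M ω' i j | m]) ω

/-- Conditional covariance matrix `Cov(V|m) = E[V Vᵀ|m] − E[V|m]·E[V|m]ᵀ` (entrywise). -/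
def covMat {Ω : Type*} {n : ℕ} (m : MeasurableSpace Ω) [MeasurableSpace Ω] (μ : Measure Ω)
    (V : Ω → Fin n → ℝ) : Ω → Matrix (Fin n) (Fin n) ℝ :=
  fun ω => ceMat m μ (fun ω' => Matrix.vecMulVec (V ω') (V ω')) ω
    - Matrix.vecMulVec (ceVec m μ V ω) (ceVec m μ V ω)

/-- Entrywise expectation of a random matrix. -/
def expMat {Ω : Type*} [MeasurableSpace Ω] {n : ℕ} (μ : Measure Ω)
    (M : Ω → Matrix (Fin n) (Fin n) ℝ) : Matrix (Fin n) (Fin n) ℝ :=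
  Matrix.of fun i j => ∫ ω, M ω i j ∂μ

/-- `Tr(E[M])` for a random matrix `M` (expectation entrywise). -/
def trExp {Ω : Type*} [MeasurableSpace Ω] {n : ℕ} (μ : Measure Ω)
    (M : Ω → Matrix (Fin n) (Fin n) ℝ) : ℝ :=
  Matrix.trace (expMat μ M)

theorem trExp_sq_eq_sum_integral {Ω : Type*} {mΩ : MeasurableSpace Ω} {μ : Measure Ω}
    {n : ℕ} {M : Ω → Matrix (Fin n) (Fin n) ℝ} (hM : ∀ i j, MemLp (fun ω => M ω i j) 2 μ) :
    trExp μ (fun ω => M ω ^ 2) = ∑ i, ∑ j, ∫ ω, M ω i j * M ω j i ∂μ := by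
  simp only [trExp, expMat, Matrix.trace, Matrix.diag_apply, Matrix.of_apply, sq, Matrix.mul_apply]
  exact Finset.sum_congr rfl fun i _ =>
    integral_finsetSum _ fun j _ => (hM i j).integrable_mul (hM j i)

theorem integral_mul_condExp_eq_integral_mul {Ω : Type*} {G mΩ : MeasurableSpace Ω}
    {μ : Measure Ω} [IsFiniteMeasure μ] (hG : G ≤ mΩ) {f g : Ω → ℝ}
    (hg : StronglyMeasurable[G] g) (hgf : Integrable (fun ω => g ω * f ω) μ)
    (hf : Integrable f μ) :
    ∫ ω, g ω * (μ[f | G]) ω ∂μ = ∫ ω, g ω * f ω ∂μ := by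
  rw [← integral_condExp hG (f := fun ω => g ω * f ω)]
  exact integral_congr_ae (condExp_mul_of_stronglyMeasurable_left hg hgf hf).symm

theorem memLp_four_apply_of_integrable_sum_sq_sq {Ω ι : Type*} [Fintype ι]
    {mΩ : MeasurableSpace Ω} {μ : Measure Ω} {V : Ω → ι → ℝ} (hV : Measurable V)
    (hV4 : Integrable (fun ω => (∑ i, (V ω i) ^ 2) ^ 2) μ) (i : ι) :
    MemLp (fun ω => V ω i) 4 μ := by
  have hmeas : Measurable fun ω => V ω i := (measurable_pi_apply i).comp hV
  rw [← integrable_norm_rpow_iff hmeas.aestronglyMeasurable (by norm_num) (by norm_num)]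
  refine hV4.mono' (hmeas.norm.pow_const _).aestronglyMeasurable (.of_forall fun ω => ?_)
  have hle : V ω i ^ 2 ≤ ∑ j, V ω j ^ 2 :=
    Finset.single_le_sum (fun j _ => sq_nonneg (V ω j)) (Finset.mem_univ i)
  have hpow : ‖V ω i‖ ^ (4 : ENNReal).toReal = (V ω i ^ 2) ^ 2 := by
    rw [ENNReal.toReal_ofNat, Real.rpow_ofNat, Real.norm_eq_abs, ← pow_mul]
    exact Even.pow_abs (by decide) _
  rw [hpow, Real.norm_of_nonneg (by positivity)]
  gcongr

theorem MeasureTheory.MemLp.mul_memLp_two_of_four {Ω : Type*} {mΩ : MeasurableSpace Ω}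
    {μ : Measure Ω} {f g : Ω → ℝ} (hf : MemLp f 4 μ) (hg : MemLp g 4 μ) :
    MemLp (fun ω => f ω * g ω) 2 μ := by
  have : ENNReal.HolderTriple 4 4 2 := ⟨by
    rw [← two_mul, show (4 : ENNReal) = 2 * 2 by norm_num,
      ENNReal.mul_inv (by simp) (by simp), ← mul_assoc,
      ENNReal.mul_inv_cancel (by simp) (by simp), one_mul]⟩
  exact hg.mul' hf

/-- The integrated form of positive semidefiniteness of the conditional covariance, tested against
the conditional mean itself. -/
theorem sum_integral_condExp_mul_sq_le {Ω ι : Type*} [Fintype ι] {G mΩ : MeasurableSpace Ω}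
    {μ : Measure Ω} [IsFiniteMeasure μ] (hG : G ≤ mΩ) {X : ι → Ω → ℝ}
    (hX : ∀ i, MemLp (X i) 4 μ) :
    ∑ i, ∑ j, ∫ ω, ((μ[X i | G]) ω * (μ[X j | G]) ω) * ((μ[X i | G]) ω * (μ[X j | G]) ω) ∂μ ≤
      ∑ i, ∑ j, ∫ ω, ((μ[X i | G]) ω * (μ[X j | G]) ω) *
        (μ[fun ω' => X i ω' * X j ω' | G]) ω ∂μ := by
  set m : ι → Ω → ℝ := fun i => μ[X i | G] with hmdef
  have hm : ∀ i, MemLp (m i) 4 μ := fun i => (hX i).condExp (by norm_num)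
  have hmG : ∀ i, StronglyMeasurable[G] (m i) := fun i => stronglyMeasurable_condExp
  have hmm := fun i j => (hm i).mul_memLp_two_of_four (hm j)
  have hmX := fun i j => (hm i).mul_memLp_two_of_four (hX j)
  have hXX := fun i j => (hX i).mul_memLp_two_of_four (hX j)
  have hint_XX : ∀ i j, Integrable (fun ω => (m i ω * m j ω) * (X i ω * X j ω)) μ :=
    fun i j => (hmm i j).integrable_mul (hXX i j)
  have hint_mm : ∀ i j, Integrable (fun ω => (m i ω * m j ω) * (m i ω * m j ω)) μ :=
    fun i j => (hmm i j).integrable_mul (hmm i j)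
  have hint_mX : ∀ i j, Integrable (fun ω => (m i ω * m j ω * m j ω) * X i ω) μ := fun i j => by
    refine ((hmm i j).integrable_mul (hmX j i)).congr (.of_forall fun ω => ?_)
    simp only [Pi.mul_apply]
    ring
  have hcross : ∀ i j, ∫ ω, (m i ω * m j ω) * (m i ω * m j ω) ∂μ =
      ∫ ω, (m i ω * m j ω * m j ω) * X i ω ∂μ := fun i j => by
    refine Eq.trans ?_ (integral_mul_condExp_eq_integral_mul hG
      (((hmG i).mul (hmG j)).mul (hmG j)) (hint_mX i j) ((hX i).integrable (by norm_num)))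
    refine integral_congr_ae (.of_forall fun ω => ?_)
    simp only [hmdef]
    ring
  have hsecond : ∀ i j, ∫ ω, (m i ω * m j ω) * (μ[fun ω' => X i ω' * X j ω' | G]) ω ∂μ =
      ∫ ω, (m i ω * m j ω) * (X i ω * X j ω) ∂μ := fun i j =>
    integral_mul_condExp_eq_integral_mul hG ((hmG i).mul (hmG j)) (hint_XX i j)
      ((hXX i j).integrable (by norm_num))
  have hexpand : ∫ ω, (∑ i, m i ω * X i ω - ∑ i, m i ω * m i ω) ^ 2 ∂μ =
      ∑ i, ∑ j, (∫ ω, (m i ω * m j ω) * (X i ω * X j ω) ∂μ -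
        ∫ ω, (m i ω * m j ω) * (m i ω * m j ω) ∂μ) := by
    have hint_sub : ∀ i j, Integrable (fun ω => (m i ω * m j ω) * (X i ω * X j ω) -
        2 * ((m i ω * m j ω * m j ω) * X i ω)) μ :=
      fun i j => (hint_XX i j).sub ((hint_mX i j).const_mul 2)
    have hterm : ∀ i j, ∫ ω, (m i ω * m j ω) * (X i ω * X j ω) ∂μ -
        ∫ ω, (m i ω * m j ω) * (m i ω * m j ω) ∂μ =
        ∫ ω, ((m i ω * m j ω) * (X i ω * X j ω) - 2 * ((m i ω * m j ω * m j ω) * X i ω) +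
          (m i ω * m j ω) * (m i ω * m j ω)) ∂μ := fun i j => by
      rw [integral_add (hint_sub i j) (hint_mm i j),
        integral_sub (hint_XX i j) ((hint_mX i j).const_mul 2), integral_const_mul, ← hcross]
      ring
    have hint : ∀ i j, Integrable (fun ω => (m i ω * m j ω) * (X i ω * X j ω) -
        2 * ((m i ω * m j ω * m j ω) * X i ω) + (m i ω * m j ω) * (m i ω * m j ω)) μ :=
      fun i j => (hint_sub i j).add (hint_mm i j)
    simp_rw [hterm]
    rw [Finset.sum_congr rfl fun i _ =>
        (integral_finsetSum Finset.univ fun j _ => hint i j).symm,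
      ← integral_finsetSum _ fun i _ => integrable_finsetSum _ fun j _ => hint i j]
    refine integral_congr_ae (.of_forall fun ω => ?_)
    beta_reduce
    rw [sub_sq]
    simp only [sq, mul_assoc (2 : ℝ), Finset.sum_mul_sum]
    simp only [Finset.mul_sum, ← Finset.sum_sub_distrib, ← Finset.sum_add_distrib]
    refine Finset.sum_congr rfl fun i _ => Finset.sum_congr rfl fun j _ => ?_
    ring
  have hnonneg : 0 ≤ ∫ ω, (∑ i, m i ω * X i ω - ∑ i, m i ω * m i ω) ^ 2 ∂μ :=
    integral_nonneg fun ω => sq_nonneg _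
  rw [hexpand] at hnonneg
  simp only [Finset.sum_sub_distrib] at hnonneg
  change _ ≤ ∑ i, ∑ j, ∫ ω, (m i ω * m j ω) * (μ[fun ω' => X i ω' * X j ω' | G]) ω ∂μ
  simp only [hsecond]
  linarith

/-- **Appendix E trace inequality for conditional covariances.** For a random vector `V`
with `E[‖V‖⁴] < ∞` and a sub-σ-algebra `G`,
`Tr(E[(Cov(V|G))²]) ≤ Tr(E[(E[VVᵀ|G])²]) − Tr(E[(E[V|G]·E[V|G]ᵀ)²])`. -/
theorem trace_conditional_covariance_inequality
    {Ω : Type*} [mΩ : MeasurableSpace Ω] (μ : Measure Ω) [IsProbabilityMeasure μ]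
    (n : ℕ) (V : Ω → Fin n → ℝ) (hV : Measurable V)
    (G : MeasurableSpace Ω) (hG : G ≤ mΩ)
    (hV4 : Integrable (fun ω => (∑ i, (V ω i) ^ 2) ^ 2) μ) :
    @trExp Ω mΩ n μ (fun ω => (@covMat Ω n G mΩ μ V ω) ^ 2) ≤
      @trExp Ω mΩ n μ (fun ω =>
          (@ceMat Ω n G mΩ μ (fun ω' => Matrix.vecMulVec (V ω') (V ω')) ω) ^ 2)
      - @trExp Ω mΩ n μ (fun ω =>
          (Matrix.vecMulVec (@ceVec Ω n G mΩ μ V ω) (@ceVec Ω n G mΩ μ V ω)) ^ 2) := by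
  have hX := memLp_four_apply_of_integrable_sum_sq_sq hV hV4
  have hm : ∀ i, MemLp (fun ω => @ceVec Ω n G mΩ μ V ω i) 4 μ := fun i => (hX i).condExp (by norm_num)
  have hB : ∀ i j, MemLp
      (fun ω => Matrix.vecMulVec (@ceVec Ω n G mΩ μ V ω) (@ceVec Ω n G mΩ μ V ω) i j) 2 μ :=
    fun i j => (hm i).mul_memLp_two_of_four (hm j)
  have hW : ∀ i j, MemLp
      (fun ω => @ceMat Ω n G mΩ μ (fun ω' => Matrix.vecMulVec (V ω') (V ω')) ω i j) 2 μ :=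
    fun i j => ((hX i).mul_memLp_two_of_four (hX j)).condExp (by norm_num)
  have hC : ∀ i j, MemLp (fun ω => @covMat Ω n G mΩ μ V ω i j) 2 μ := fun i j => (hW i j).sub (hB i j)
  rw [trExp_sq_eq_sum_integral hB, trExp_sq_eq_sum_integral hW, trExp_sq_eq_sum_integral hC]
  set W : Ω → Matrix (Fin n) (Fin n) ℝ :=
    @ceMat Ω n G mΩ μ (fun ω' => Matrix.vecMulVec (V ω') (V ω')) with hWdef
  set B : Ω → Matrix (Fin n) (Fin n) ℝ :=
    fun ω => Matrix.vecMulVec (@ceVec Ω n G mΩ μ V ω) (@ceVec Ω n G mΩ μ V ω)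
  have hWsymm : ∀ ω i j, W ω j i = W ω i j := fun ω i j => by
    simp only [hWdef, ceMat, Matrix.of_apply, Matrix.vecMulVec_apply, mul_comm]
  have hBsymm : ∀ ω i j, B ω j i = B ω i j := fun ω i j => mul_comm _ _
  have hcov : ∀ i j, ∫ ω, @covMat Ω n G mΩ μ V ω i j * @covMat Ω n G mΩ μ V ω j i ∂μ =
      ∫ ω, W ω i j * W ω j i ∂μ - 2 * ∫ ω, B ω i j * W ω i j ∂μ +
        ∫ ω, B ω i j * B ω j i ∂μ := fun i j => by
    have hWW : Integrable (fun ω => W ω i j * W ω j i) μ := (hW i j).integrable_mul (hW j i)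
    have hBW : Integrable (fun ω => 2 * (B ω i j * W ω i j)) μ :=
      ((hB i j).integrable_mul (hW i j)).const_mul 2
    have hBB : Integrable (fun ω => B ω i j * B ω j i) μ := (hB i j).integrable_mul (hB j i)
    have hsub : Integrable (fun ω => W ω i j * W ω j i - 2 * (B ω i j * W ω i j)) μ :=
      hWW.sub hBW
    rw [← integral_const_mul, ← integral_sub hWW hBW, ← integral_add hsub hBB]
    refine integral_congr_ae (.of_forall fun ω => ?_)
    change (W ω i j - B ω i j) * (W ω j i - B ω j i) =
      W ω i j * W ω j i - 2 * (B ω i j * W ω i j) + B ω i j * B ω j i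
    rw [hWsymm ω i j, hBsymm ω i j]
    ring
  have hkey : ∑ i, ∑ j, ∫ ω, B ω i j * B ω j i ∂μ ≤ ∑ i, ∑ j, ∫ ω, B ω i j * W ω i j ∂μ := by
    simp_rw [hBsymm]
    exact sum_integral_condExp_mul_sq_le hG hX
  change _ ≤ ∑ i, ∑ j, ∫ ω, W ω i j * W ω j i ∂μ - ∑ i, ∑ j, ∫ ω, B ω i j * B ω j i ∂μ
  simp_rw [hcov, Finset.sum_add_distrib, Finset.sum_sub_distrib, ← Finset.mul_sum]
  linarith

end
end
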